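/- Let A and à be N×N Jacobi matrices with response functions r and r̃ respectively. If there exists ε > 0 such that r(t) = r̃(t) for all t ∈ (0, ε), then A = Ã. -/

import Mathlib

open MeasureTheory Real Matrix

/-- `S t λ` solves `S'' = -λ S`, `S 0 = 0`, `S' 0 = 1`. -/
noncomputable def S (t lam : ℝ) : ℝ :=
  if 0 < lam then Real.sin (Real.sqrt lam * t) / Real.sqrt lam
  else if lam < 0 then Real.sinh (Real.sqrt (-lam) * t) / Real.sqrt (-lam)
  else t

/-- An `N × N` Jacobi matrix: real symmetric tridiagonal with positive off-diagonal entries. -/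
def IsJacobi {N : ℕ} (A : Matrix (Fin N) (Fin N) ℝ) : Prop :=
  (∀ i j, A i j = A j i) ∧
  (∀ i j : Fin N, (i : ℕ) + 1 < (j : ℕ) → A i j = 0) ∧
  (∀ i j : Fin N, (i : ℕ) + 1 = (j : ℕ) → 0 < A i j)

/-!
The function `S` is analytic in `t`, so the response functions agree everywhere as soon as the
points where they agree accumulate somewhere. Since `S'' = -λ S` and `S' 0 = 1`, the odd
derivatives of `r` at `0` are, up to sign, the moments `∑ k, λ_k ^ n / ρ_k`, and by the spectral
decomposition these are the entries `⟨e, A ^ n e⟩`, where `e` is the first basis vector.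

The moments determine `A`: the Krylov matrix `K = [e, A e, …, A ^ (N - 1) e]` is upper triangular
with positive diagonal, and `Kᵀ K` and `Kᵀ A K` are Hankel matrices of moments. So `K` is the
Cholesky factor of the first, and `A` is recovered from the second.
-/

/-- The time derivative of `S`: the solution of `C'' = -λ C`, `C 0 = 1`, `C' 0 = 0`. -/
noncomputable def C (t lam : ℝ) : ℝ :=
  if 0 < lam then Real.cos (√lam * t)
  else if lam < 0 then Real.cosh (√(-lam) * t)
  else 1

theorem C_zero_left (lam : ℝ) : C 0 lam = 1 := by
  simp [C]

theorem hasDerivAt_S (t lam : ℝ) : HasDerivAt (S · lam) (C t lam) t := by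
  rcases lt_trichotomy lam 0 with hneg | rfl | hpos
  · have hsqrt : √(-lam) ≠ 0 := (Real.sqrt_pos.2 (neg_pos.2 hneg)).ne'
    simpa [S, C, hneg, hneg.not_gt, hsqrt] using
      (hasDerivAt_const_mul √(-lam)).sinh.div_const √(-lam)
  · simpa [S, C] using hasDerivAt_id' t
  · have hsqrt : √lam ≠ 0 := (Real.sqrt_pos.2 hpos).ne'
    simpa [S, C, hpos, hsqrt] using (hasDerivAt_const_mul √lam).sin.div_const √lam

theorem hasDerivAt_C (t lam : ℝ) : HasDerivAt (C · lam) (-lam * S t lam) t := by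
  rcases lt_trichotomy lam 0 with hneg | rfl | hpos
  · have hderiv : -lam * S t lam = Real.sinh (√(-lam) * t) * √(-lam) := by
      simp only [S, hneg, hneg.not_gt, if_true, if_false]
      rw [mul_div_left_comm, Real.div_sqrt]
    simpa [C, hneg, hneg.not_gt, hderiv] using (hasDerivAt_const_mul √(-lam)).cosh
  · simpa [C] using hasDerivAt_const t (1 : ℝ)
  · have hderiv : -lam * S t lam = -Real.sin (√lam * t) * √lam := by
      simp only [S, hpos, if_true]
      rw [neg_mul, neg_mul, mul_div_left_comm, Real.div_sqrt]
    simpa [C, hpos, hderiv] using (hasDerivAt_const_mul √lam).cos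

theorem analyticAt_S (t lam : ℝ) : AnalyticAt ℝ (S · lam) t := by
  unfold S
  split_ifs <;> fun_prop

section Response

variable {ι : Type*} [Fintype ι] (w lam : ι → ℝ)

/-- The response function of the discrete spectral measure `∑ k, w k • δ_{lam k}`; for a Jacobi
matrix the weights are `w k = 1 / ρ k`. -/
noncomputable def response (t : ℝ) : ℝ :=
  ∑ k, w k * S t (lam k)

theorem analyticOnNhd_response : AnalyticOnNhd ℝ (response w lam) Set.univ := fun t _ =>
  Finset.analyticAt_fun_sum _ fun k _ => analyticAt_const.mul (analyticAt_S t (lam k))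

theorem deriv_response : deriv (response w lam) = fun t => ∑ k, w k * C t (lam k) :=
  funext fun t => (HasDerivAt.fun_sum fun k _ => (hasDerivAt_S t (lam k)).const_mul (w k)).deriv

theorem iteratedDeriv_two_response :
    iteratedDeriv 2 (response w lam) = response (fun k => w k * -lam k) lam := by
  rw [iteratedDeriv_succ, iteratedDeriv_one, deriv_response]
  ext t
  simp only [response, mul_assoc]
  exact (HasDerivAt.fun_sum fun k _ => (hasDerivAt_C t (lam k)).const_mul (w k)).deriv

theorem iteratedDeriv_two_mul_response (n : ℕ) :
    iteratedDeriv (2 * n) (response w lam) = response (fun k => w k * (-lam k) ^ n) lam := by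
  induction n with
  | zero => simp
  | succ n ih =>
    rw [mul_add_one, add_comm, iteratedDeriv_eq_iterate, Function.iterate_add_apply,
      ← iteratedDeriv_eq_iterate, ← iteratedDeriv_eq_iterate, ih, iteratedDeriv_two_response]
    simp only [pow_succ, mul_assoc]

theorem iteratedDeriv_two_mul_add_one_response_zero (n : ℕ) :
    iteratedDeriv (2 * n + 1) (response w lam) 0 = (-1) ^ n * ∑ k, w k * lam k ^ n := by
  simp only [iteratedDeriv_succ, iteratedDeriv_two_mul_response, deriv_response, C_zero_left,
    mul_one, Finset.mul_sum, neg_pow (lam _) n, mul_left_comm]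

variable {w lam}

theorem sum_mul_pow_eq_of_response_eq {κ : Type*} [Fintype κ] {v μ : κ → ℝ}
    (h : response w lam = response v μ) (n : ℕ) :
    ∑ k, w k * lam k ^ n = ∑ l, v l * μ l ^ n :=
  mul_left_cancel₀ (pow_ne_zero n (neg_ne_zero.2 one_ne_zero)) <| by
    rw [← iteratedDeriv_two_mul_add_one_response_zero, h,
      iteratedDeriv_two_mul_add_one_response_zero]

end Response

section Spectral

variable {n : Type*} [Fintype n]

theorem pow_mulVec_eq_pow_smul {R : Type*} [CommSemiring R] [DecidableEq n]
    {A : Matrix n n R} {v : n → R} {μ : R} (hv : A *ᵥ v = μ • v) (m : ℕ) :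
    A ^ m *ᵥ v = μ ^ m • v := by
  induction m with
  | zero => simp
  | succ m ih => rw [pow_succ, ← mulVec_mulVec, hv, mulVec_smul, ih, smul_smul, pow_succ']

theorem dotProduct_eq_zero_of_mulVec_eq_smul {R : Type*} [CommRing R] [NoZeroDivisors R]
    {A : Matrix n n R} (hA : A.IsSymm) {μ ν : R} (hμν : μ ≠ ν) {v w : n → R}
    (hv : A *ᵥ v = μ • v) (hw : A *ᵥ w = ν • w) : v ⬝ᵥ w = 0 := by
  have h : μ * (v ⬝ᵥ w) = ν * (v ⬝ᵥ w) :=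
    calc μ * (v ⬝ᵥ w) = A *ᵥ v ⬝ᵥ w := by rw [hv, smul_dotProduct, smul_eq_mul]
      _ = v ⬝ᵥ A *ᵥ w := by rw [dotProduct_mulVec, ← mulVec_transpose, hA.eq]
      _ = ν * (v ⬝ᵥ w) := by rw [hw, dotProduct_smul, smul_eq_mul]
  exact (mul_eq_mul_right_iff.1 h).resolve_left hμν

variable {K : Type*} [Field K] [DecidableEq n] {φ : n → n → K}

theorem sum_smul_vecMulVec_self_eq_one
    (horth : Pairwise fun k l => φ k ⬝ᵥ φ l = 0) (hne : ∀ k, φ k ⬝ᵥ φ k ≠ 0) :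
    ∑ k, (φ k ⬝ᵥ φ k)⁻¹ • vecMulVec (φ k) (φ k) = 1 := by
  let D : Matrix n n K := diagonal fun k => (φ k ⬝ᵥ φ k)⁻¹
  have hrow : D * of φ * (of φ)ᵀ = 1 := by
    ext k l
    rw [Matrix.mul_assoc, diagonal_mul]
    change _ * (φ k ⬝ᵥ φ l) = _
    obtain rfl | hkl := eq_or_ne k l
    · rw [inv_mul_cancel₀ (hne k), one_apply_eq]
    · rw [horth hkl, mul_zero, one_apply_ne hkl]
  rw [← mul_eq_one_comm.1 hrow]
  ext i j
  simp [D, Matrix.sum_apply, mul_apply, diagonal_apply, vecMulVec_apply, mul_left_comm]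

theorem pow_eq_sum_smul_vecMulVec_self {A : Matrix n n K} {lam : n → K} (hA : A.IsSymm)
    (hlam : Function.Injective lam) (heig : ∀ k, A *ᵥ φ k = lam k • φ k)
    (hne : ∀ k, φ k ⬝ᵥ φ k ≠ 0) (m : ℕ) :
    A ^ m = ∑ k, (lam k ^ m / (φ k ⬝ᵥ φ k)) • vecMulVec (φ k) (φ k) := by
  have horth : Pairwise fun k l => φ k ⬝ᵥ φ l = 0 := fun k l hkl =>
    dotProduct_eq_zero_of_mulVec_eq_smul hA (hlam.ne hkl) (heig k) (heig l)
  calc A ^ m = A ^ m * ∑ k, (φ k ⬝ᵥ φ k)⁻¹ • vecMulVec (φ k) (φ k) := by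
        rw [sum_smul_vecMulVec_self_eq_one horth hne, mul_one]
    _ = ∑ k, (lam k ^ m / (φ k ⬝ᵥ φ k)) • vecMulVec (φ k) (φ k) := by
        simp only [Matrix.mul_sum, Matrix.mul_smul, mul_vecMulVec, smul_vecMulVec,
          pow_mulVec_eq_pow_smul (heig _), smul_smul, div_eq_inv_mul]

theorem pow_apply_self_eq_sum_of_mulVec_eq_smul [LinearOrder K] [IsStrictOrderedRing K]
    {A : Matrix n n K} {lam : n → K} (hA : A.IsSymm) (hlam : Function.Injective lam)
    (heig : ∀ k, A *ᵥ φ k = lam k • φ k) {i : n} (hφ : ∀ k, φ k i = 1) (m : ℕ) :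
    (A ^ m) i i = ∑ k, 1 / (φ k ⬝ᵥ φ k) * lam k ^ m := by
  have hne (k : n) : φ k ⬝ᵥ φ k ≠ 0 := fun h => by
    simpa [dotProduct_self_eq_zero.1 h] using hφ k
  rw [pow_eq_sum_smul_vecMulVec_self hA hlam heig hne]
  simp [Matrix.sum_apply, vecMulVec_apply, hφ, div_eq_inv_mul]

end Spectral

theorem eq_of_transpose_mul_self_eq {n R : Type*} [Fintype n] [LinearOrder n] [Ring R]
    [LinearOrder R] [IsStrictOrderedRing R] {V W : Matrix n n R}
    (hV : V.IsUpperTriangular) (hW : W.IsUpperTriangular)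
    (hV_pos : ∀ i, 0 < V i i) (hW_pos : ∀ i, 0 < W i i) (h : Vᵀ * V = Wᵀ * W) : V = W := by
  suffices hrow : ∀ i, V i = W i from funext hrow
  intro i
  induction i using WellFoundedLT.induction with
  | ind i ih =>
    have hpivot (j : n) : V i i * V i j = W i i * W i j := by
      have hsum : ∑ k, V k i * V k j = ∑ k, W k i * W k j := congrFun₂ h i j
      have hrest : ∑ k ∈ Finset.univ.erase i, V k i * V k j =
          ∑ k ∈ Finset.univ.erase i, W k i * W k j := by
        refine Finset.sum_congr rfl fun k hk => ?_
        obtain hlt | hgt := lt_or_gt_of_ne (Finset.ne_of_mem_erase hk)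
        · rw [ih k hlt]
        · rw [hV hgt, hW hgt, zero_mul, zero_mul]
      rwa [← Finset.add_sum_erase _ _ (Finset.mem_univ i),
        ← Finset.add_sum_erase _ _ (Finset.mem_univ i), hrest, add_left_inj] at hsum
    have hdiag : V i i = W i i := (mul_self_inj (hV_pos i).le (hW_pos i).le).1 (hpivot i)
    exact funext fun j => mul_left_cancel₀ (hW_pos i).ne' (hdiag ▸ hpivot j)

section Krylov

variable {n R : Type*} [Fintype n] [DecidableEq n] [CommSemiring R]

/-- The Krylov matrix of `A` and `v`, with columns `v, A v, …, A ^ (N - 1) v`. -/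
def krylovMatrix (A : Matrix n n R) (v : n → R) (N : ℕ) : Matrix n (Fin N) R :=
  of fun i j => (A ^ (j : ℕ) *ᵥ v) i

theorem transpose_krylovMatrix_mul_pow_mul_krylovMatrix {A : Matrix n n R} (hA : A.IsSymm)
    (v : n → R) (N m : ℕ) :
    (krylovMatrix A v N)ᵀ * (A ^ m * krylovMatrix A v N) =
      of fun i j : Fin N => v ⬝ᵥ A ^ (i + m + j : ℕ) *ᵥ v := by
  ext i j
  calc ((krylovMatrix A v N)ᵀ * (A ^ m * krylovMatrix A v N)) i j
      = (A ^ (i : ℕ) *ᵥ v) ⬝ᵥ (A ^ m *ᵥ (A ^ (j : ℕ) *ᵥ v)) := rfl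
    _ = v ⬝ᵥ A ^ (i + m + j : ℕ) *ᵥ v := by
      rw [pow_add, pow_add, ← mulVec_mulVec, ← mulVec_mulVec, dotProduct_mulVec v,
        ← mulVec_transpose, (hA.pow i).eq]

end Krylov

namespace IsJacobi

variable {N : ℕ} {A B : Matrix (Fin N) (Fin N) ℝ}

theorem isSymm (hA : IsJacobi A) : A.IsSymm :=
  IsSymm.ext fun i j => hA.1 j i

theorem apply_eq_zero_of_succ_lt (hA : IsJacobi A) {i j : Fin N} (h : (j : ℕ) + 1 < i) :
    A i j = 0 :=
  (hA.1 i j).trans (hA.2.1 j i h)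

theorem apply_pos_of_succ_eq (hA : IsJacobi A) {i j : Fin N} (h : (j : ℕ) + 1 = i) : 0 < A i j :=
  (hA.2.2 j i h).trans_eq (hA.1 j i)

theorem pow_apply_eq_zero_of_add_lt (hA : IsJacobi A) {n : ℕ} {i j : Fin N}
    (h : (j : ℕ) + n < i) : (A ^ n) i j = 0 := by
  induction n generalizing i with
  | zero => exact one_apply_ne (Fin.ne_of_gt h)
  | succ n ih =>
    rw [pow_succ', mul_apply]
    refine Finset.sum_eq_zero fun k _ => mul_eq_zero.2 ?_
    obtain hk | hk := lt_or_ge (j + n : ℕ) k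
    · exact .inr (ih hk)
    · exact .inl (hA.apply_eq_zero_of_succ_lt (by lia))

theorem pow_apply_pos_of_add_eq (hA : IsJacobi A) {n : ℕ} {i j : Fin N} (h : (j : ℕ) + n = i) :
    0 < (A ^ n) i j := by
  induction n generalizing i with
  | zero =>
    obtain rfl : j = i := Fin.ext h
    simp
  | succ n ih =>
    rw [pow_succ', mul_apply, Finset.sum_eq_single (⟨j + n, by lia⟩ : Fin N)]
    · exact mul_pos (hA.apply_pos_of_succ_eq h) (ih rfl)
    · intro k _ hk
      obtain hk | hk := lt_or_gt_of_ne (Fin.val_ne_of_ne hk)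
      · rw [hA.apply_eq_zero_of_succ_lt (by simp only at hk; lia), zero_mul]
      · rw [hA.pow_apply_eq_zero_of_add_lt hk, mul_zero]
    · simp

variable (hN : 0 < N)

theorem isUpperTriangular_krylovMatrix (hA : IsJacobi A) :
    (krylovMatrix A (Pi.single ⟨0, hN⟩ 1) N).IsUpperTriangular := fun i j hij => by
  simpa [krylovMatrix] using
    hA.pow_apply_eq_zero_of_add_lt (j := ⟨0, hN⟩) (n := j) (i := i) (by simpa using hij)

theorem krylovMatrix_diag_pos (hA : IsJacobi A) (i : Fin N) :
    0 < krylovMatrix A (Pi.single ⟨0, hN⟩ 1) N i i := by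
  simpa [krylovMatrix] using
    hA.pow_apply_pos_of_add_eq (j := ⟨0, hN⟩) (n := i) (i := i) (zero_add _)

theorem isUnit_krylovMatrix (hA : IsJacobi A) :
    IsUnit (krylovMatrix A (Pi.single ⟨0, hN⟩ 1) N) := by
  rw [isUnit_iff_isUnit_det, det_of_isUpperTriangular (hA.isUpperTriangular_krylovMatrix hN)]
  exact (Finset.prod_pos fun i _ => hA.krylovMatrix_diag_pos hN i).ne'.isUnit

theorem eq_of_forall_pow_apply_zero_eq (hA : IsJacobi A) (hB : IsJacobi B)
    (h : ∀ n : ℕ, (A ^ n) ⟨0, hN⟩ ⟨0, hN⟩ = (B ^ n) ⟨0, hN⟩ ⟨0, hN⟩) : A = B := by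
  let e : Fin N → ℝ := Pi.single ⟨0, hN⟩ 1
  have hHankel (m : ℕ) : (krylovMatrix A e N)ᵀ * (A ^ m * krylovMatrix A e N) =
      (krylovMatrix B e N)ᵀ * (B ^ m * krylovMatrix B e N) := by
    simp only [transpose_krylovMatrix_mul_pow_mul_krylovMatrix hA.isSymm,
      transpose_krylovMatrix_mul_pow_mul_krylovMatrix hB.isSymm]
    simp [e, h]
  have hKrylov : krylovMatrix A e N = krylovMatrix B e N :=
    eq_of_transpose_mul_self_eq (hA.isUpperTriangular_krylovMatrix hN)
      (hB.isUpperTriangular_krylovMatrix hN) (hA.krylovMatrix_diag_pos hN)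
      (hB.krylovMatrix_diag_pos hN) (by simpa using hHankel 0)
  have hunit : IsUnit (krylovMatrix A e N) := hA.isUnit_krylovMatrix hN
  have hmul := hHankel 1
  rw [pow_one, pow_one, ← hKrylov] at hmul
  exact hunit.mul_right_cancel (((isUnit_transpose _).2 hunit).mul_left_cancel hmul)

end IsJacobi

open scoped Topology in
theorem stmt12_general {N : ℕ} (hN : 0 < N) {A B : Matrix (Fin N) (Fin N) ℝ}
    (hA : IsJacobi A) (hB : IsJacobi B)
    {lamA lamB : Fin N → ℝ} {φA φB : Fin N → Fin N → ℝ} {ρA ρB : Fin N → ℝ}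
    (hlamA : Function.Injective lamA) (hlamB : Function.Injective lamB)
    (heigA : ∀ k, A *ᵥ φA k = lamA k • φA k)
    (heigB : ∀ k, B *ᵥ φB k = lamB k • φB k)
    (hφA1 : ∀ k, φA k ⟨0, hN⟩ = 1) (hφB1 : ∀ k, φB k ⟨0, hN⟩ = 1)
    (hρA : ∀ k, ρA k = φA k ⬝ᵥ φA k) (hρB : ∀ k, ρB k = φB k ⬝ᵥ φB k)
    {rA rB : ℝ → ℝ}
    (hrA : rA = response (fun k => 1 / ρA k) lamA)
    (hrB : rB = response (fun k => 1 / ρB k) lamB)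
    {t₀ : ℝ} (hr : ∃ᶠ t in 𝓝[≠] t₀, rA t = rB t) :
    A = B := by
  obtain rfl : ρA = fun k => φA k ⬝ᵥ φA k := funext hρA
  obtain rfl : ρB = fun k => φB k ⬝ᵥ φB k := funext hρB
  subst hrA hrB
  have hresponse : response (fun k => 1 / (φA k ⬝ᵥ φA k)) lamA =
      response (fun k => 1 / (φB k ⬝ᵥ φB k)) lamB :=
    (analyticOnNhd_response _ _).eq_of_frequently_eq (analyticOnNhd_response _ _) hr
  refine hA.eq_of_forall_pow_apply_zero_eq hN hB fun n => ?_
  calc (A ^ n) ⟨0, hN⟩ ⟨0, hN⟩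
      = ∑ k, 1 / (φA k ⬝ᵥ φA k) * lamA k ^ n :=
        pow_apply_self_eq_sum_of_mulVec_eq_smul hA.isSymm hlamA heigA hφA1 n
    _ = ∑ k, 1 / (φB k ⬝ᵥ φB k) * lamB k ^ n := sum_mul_pow_eq_of_response_eq hresponse n
    _ = (B ^ n) ⟨0, hN⟩ ⟨0, hN⟩ :=
        (pow_apply_self_eq_sum_of_mulVec_eq_smul hB.isSymm hlamB heigB hφB1 n).symm

/-- if the response functions of two `N×N` Jacobi matrices coincide on
some interval `(0, ε)`, then the matrices coincide. -/
theorem stmt12 {N : ℕ} (hN : 0 < N) (A B : Matrix (Fin N) (Fin N) ℝ)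
    (hA : IsJacobi A) (hB : IsJacobi B)
    (lamA lamB : Fin N → ℝ) (φA φB : Fin N → Fin N → ℝ) (ρA ρB : Fin N → ℝ)
    (hlamA : StrictMono lamA) (hlamB : StrictMono lamB)
    (heigA : ∀ k, A.mulVec (φA k) = lamA k • φA k)
    (heigB : ∀ k, B.mulVec (φB k) = lamB k • φB k)
    (hφA1 : ∀ k, φA k ⟨0, hN⟩ = 1) (hφB1 : ∀ k, φB k ⟨0, hN⟩ = 1)
    (hρA : ∀ k, ρA k = ∑ i, φA k i * φA k i) (hρB : ∀ k, ρB k = ∑ i, φB k i * φB k i)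
    (rA rB : ℝ → ℝ)
    (hrA : rA = fun t => ∑ k, (1 / ρA k) * S t (lamA k))
    (hrB : rB = fun t => ∑ k, (1 / ρB k) * S t (lamB k))
    (ε : ℝ) (hε : 0 < ε) (hr : ∀ t ∈ Set.Ioo (0:ℝ) ε, rA t = rB t) :
    A = B := by
  have hfreq : ∃ᶠ t in nhdsWithin (ε / 2) {ε / 2}ᶜ, rA t = rB t :=
    (eventually_nhdsWithin_of_eventually_nhds <| Filter.eventually_of_mem
      (Ioo_mem_nhds (half_pos hε) (half_lt_self hε)) hr).frequently
  exact stmt12_general hN hA hB hlamA.injective hlamB.injective heigA heigB hφA1 hφB1 hρA hρB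
    hrA hrB hfreq
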